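/- Let a' > 0 and b' > 0 be real constants and let μ₁ denote the exponential probability distribution on (0, ∞) with rate parameter 1. Then the integral (taken in [0, ∞], i.e. both sides may be infinite) of the function c ↦ a' / ln(1 + b'·c) with respect to μ₁ equals (a'/b') · ∫₀^∞ exp( a'/t + (1 − exp(a'/t))/b' ) · (1/t) dt. (With a' = Y·ln 2 / W and b' = P_A·N⁻²·(d^{AV})^{−l}, this is the paper's formula E[V_j^T] for the expected time to transmit a processed packet of size Y from the edge server to the vehicular fog over a Rayleigh-fading channel.) -/

import Mathlib

/-!
The identity is a change of variables. The exponential law with rate 1 has density `exp (-c)` on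
`(0, ∞)`, so the left side is `∫₀^∞ a' / ln (1 + b' c) · exp (-c) dc`. Substituting
`t = a' / ln (1 + b' c)`, that is `c = (exp (a' / t) - 1) / b'`, which maps `(0, ∞)` bijectively
onto itself with `|dc/dt| = (a' / b') · exp (a' / t) / t²`, gives the right side. Everything is
done with the lower Lebesgue integral, so no integrability is needed.
-/

open MeasureTheory ProbabilityTheory Real

/-- The exponential law with rate 1 has density `exp (-c)` on the open half-line. -/
lemma lintegral_expMeasure_one (g : ℝ → ENNReal) (hg : Measurable g) :
    ∫⁻ c, g c ∂(expMeasure 1) =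
      ∫⁻ c in Set.Ioi (0 : ℝ), ENNReal.ofReal (Real.exp (-c)) * g c := by
  have hpdf : Measurable (exponentialPDF 1) :=
    (measurable_exponentialPDFReal 1).ennreal_ofReal
  have hm : expMeasure 1 = volume.withDensity (exponentialPDF 1) := rfl
  rw [hm, lintegral_withDensity_eq_lintegral_mul _ hpdf hg,
    setLIntegral_congr (Ioi_ae_eq_Ici (a := (0 : ℝ))), ← lintegral_indicator measurableSet_Ici]
  congr 1 with c
  by_cases hc : 0 ≤ c
  · simp [exponentialPDF_of_nonneg hc, hc]
  · simp [exponentialPDF_of_neg (not_le.1 hc), hc]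

/-- The channel gain `c` at which the transmission time `a' / ln (1 + b' c)` equals `t`. -/
noncomputable def gainOfTime (a' b' t : ℝ) : ℝ := (Real.exp (a' / t) - 1) / b'

lemma log_gainOfTime {a' b' : ℝ} (hb' : 0 < b') (t : ℝ) :
    Real.log (1 + b' * gainOfTime a' b' t) = a' / t := by
  rw [gainOfTime, mul_div_cancel₀ _ hb'.ne', add_sub_cancel, Real.log_exp]

lemma time_gainOfTime {a' b' : ℝ} (ha' : 0 < a') (hb' : 0 < b') (t : ℝ) :
    a' / Real.log (1 + b' * gainOfTime a' b' t) = t := by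
  rw [log_gainOfTime hb', div_div_cancel₀ ha'.ne']

lemma gainOfTime_image {a' b' : ℝ} (ha' : 0 < a') (hb' : 0 < b') :
    gainOfTime a' b' '' Set.Ioi 0 = Set.Ioi 0 := by
  ext c
  simp only [Set.mem_image, Set.mem_Ioi]
  constructor
  · rintro ⟨t, ht, rfl⟩
    exact div_pos (sub_pos.2 (Real.one_lt_exp_iff.2 (div_pos ha' ht))) hb'
  · intro hc
    have h1 : 0 < b' * c := mul_pos hb' hc
    refine ⟨a' / Real.log (1 + b' * c), div_pos ha' (Real.log_pos (by linarith)), ?_⟩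
    rw [gainOfTime, div_div_cancel₀ ha'.ne', Real.exp_log (by linarith), add_sub_cancel_left,
      mul_div_cancel_left₀ _ hb'.ne']

lemma hasDerivAt_gainOfTime (a' b' : ℝ) {t : ℝ} (ht : 0 < t) :
    HasDerivAt (gainOfTime a' b') (-(Real.exp (a' / t) * (a' / t ^ 2) / b')) t := by
  have h : HasDerivAt (fun s : ℝ => a' / s) (-(a' / t ^ 2)) t := by
    simpa [div_eq_mul_inv] using (hasDerivAt_inv ht.ne').const_mul a'
  exact ((h.exp.sub_const 1).div_const b').congr_deriv (by ring)

/-- For `a', b' > 0` and `μ₁` the exponential distribution with rate 1,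
the `[0,∞]`-valued integral of `c ↦ a' / ln(1 + b'·c)` with respect to `μ₁` equals
`(a'/b') · ∫₀^∞ exp(a'/t + (1 − exp(a'/t))/b') · (1/t) dt`. -/
theorem expected_transmission_time_edge_to_vehicularFog (a' b' : ℝ) (ha' : 0 < a') (hb' : 0 < b') :
    ∫⁻ c, ENNReal.ofReal (a' / Real.log (1 + b' * c)) ∂(expMeasure 1) =
      ENNReal.ofReal (a' / b') *
        ∫⁻ t in Set.Ioi (0 : ℝ),
          ENNReal.ofReal (Real.exp (a' / t + (1 - Real.exp (a' / t)) / b') * (1 / t)) := by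
  have hinj : Set.InjOn (gainOfTime a' b') (Set.Ioi 0) := fun s _ t _ h => by
    rw [← time_gainOfTime ha' hb' s, h, time_gainOfTime ha' hb']
  rw [lintegral_expMeasure_one _ (by fun_prop), ← gainOfTime_image ha' hb',
    lintegral_image_eq_lintegral_abs_deriv_mul measurableSet_Ioi
      (fun t ht => (hasDerivAt_gainOfTime a' b' ht).hasDerivWithinAt) hinj,
    gainOfTime_image ha' hb', ← lintegral_const_mul _ (by fun_prop)]
  refine setLIntegral_congr_fun measurableSet_Ioi fun t ht => ?_
  have ht : 0 < t := ht
  have hexp : Real.exp (-gainOfTime a' b' t) = Real.exp ((1 - Real.exp (a' / t)) / b') := by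
    rw [gainOfTime, ← neg_div, neg_sub]
  simp only [time_gainOfTime ha' hb', hexp]
  rw [abs_neg, abs_of_pos (by positivity), ← ENNReal.ofReal_mul (by positivity),
    ← ENNReal.ofReal_mul (by positivity), ← ENNReal.ofReal_mul (by positivity), Real.exp_add]
  congr 1
  field_simp
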